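/- arXiv:math/0602131 — 3 statements merged into one kernel-verified Lean document; each statement's English description precedes it below -/
import Mathlib

section
/- Let G be a finitely generated nilpotent group, H ≤ G of finite index, and f : H → G a monomorphism. Then the image f(H) has finite index in G. -/
/-!
Iterating `f` gives the descending chain `G ⊇ f(H) ⊇ f(f(H) ∩ H) ⊇ ⋯`. As `f` is injective and
`H` has finite index, each step of the chain has finite index only if the step before it has. So
if `f(H)` had infinite index in `G`, then every step would have infinite index. In a finitely
generated nilpotent group this is impossible: the factors of the lower central series are finitely
generated abelian, in such a factor every step that preserves the rank has finite index, and the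
absence of chains with infinitely many steps of infinite index passes to extensions.
-/

open Filter
open scoped Pointwise commutatorElement

/-- The weak minimal condition on subgroups: a descending chain of subgroups has only finitely many
steps of infinite index. -/
def WeakMinimalCondition (G : Type*) [Group G] : Prop :=
  ∀ K : ℕ → Subgroup G, Antitone K → ∀ᶠ n in atTop, (K (n + 1)).IsFiniteRelIndex (K n)

section Index

variable {G Q : Type*} [Group G] [Group Q]

theorem relIndex_eq_of_subset_mul {H K L : Subgroup G} (hKL : K ≤ L)
    (hL : (L : Set G) ⊆ K * H) : H.relIndex K = H.relIndex L := by
  refine Nat.card_congr (Equiv.ofBijective (Subgroup.quotientSubgroupOfEmbeddingOfLE H hKL)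
    ⟨Function.Embedding.injective _, fun q ↦ ?_⟩)
  induction q using QuotientGroup.induction_on with
  | H x =>
    obtain ⟨k, hk, h, hh, hkh⟩ := hL x.2
    refine ⟨QuotientGroup.mk ⟨k, hk⟩, ?_⟩
    rw [Subgroup.quotientSubgroupOfEmbeddingOfLE_apply_mk, QuotientGroup.eq,
      Subgroup.mem_subgroupOf]
    simpa [← hkh] using hh

theorem relIndex_inf_ker_mul_relIndex_map (φ : G →* Q) {L K : Subgroup G} (hLK : L ≤ K) :
    L.relIndex (K ⊓ φ.ker) * (L.map φ).relIndex (K.map φ) = L.relIndex K := by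
  set M : Subgroup G := (L.map φ).comap φ with hM
  have hLM : L ≤ M := Subgroup.le_comap_map φ L
  have hker : K ⊓ φ.ker ≤ M ⊓ K :=
    le_inf (inf_le_right.trans (Subgroup.ker_le_comap _ _)) inf_le_left
  have hmul : ((M ⊓ K : Subgroup G) : Set G) ⊆ (K ⊓ φ.ker : Subgroup G) * (L : Set G) := by
    rintro x ⟨⟨l, hl, hlx⟩, hxK⟩
    refine ⟨x * l⁻¹, ⟨K.mul_mem hxK (K.inv_mem (hLK hl)), ?_⟩, l, hl, inv_mul_cancel_right x l⟩
    simp [hlx]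
  calc L.relIndex (K ⊓ φ.ker) * (L.map φ).relIndex (K.map φ)
      = L.relIndex (M ⊓ K) * M.relIndex K := by
        rw [relIndex_eq_of_subset_mul hker hmul, hM, Subgroup.relIndex_comap]
    _ = (L ⊓ M).relIndex K := Subgroup.relIndex_inf_mul_relIndex L M K
    _ = L.relIndex K := by rw [inf_eq_left.mpr hLM]

theorem isFiniteRelIndex_of_map_subgroupOf {H : Subgroup G} [H.FiniteIndex] {f : H →* Q}
    (hf : Function.Injective f) {L K : Subgroup G}
    (h : ((L.subgroupOf H).map f).IsFiniteRelIndex ((K.subgroupOf H).map f)) :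
    L.IsFiniteRelIndex K := by
  have hLKH : L.relIndex (K ⊓ H) ≠ 0 := by
    rw [← Subgroup.subgroupOf_map_subtype, ← Subgroup.relIndex_comap,
      ← Subgroup.relIndex_map_map_of_injective _ _ hf]
    exact h.relIndex_ne_zero
  have hKHK : (K ⊓ H).relIndex K ≠ 0 := by
    rw [Subgroup.inf_relIndex_left]
    exact Subgroup.isFiniteRelIndex_of_finiteIndex.relIndex_ne_zero
  exact ⟨Subgroup.relIndex_ne_zero_trans hLKH hKHK⟩

end Index

theorem finite_quotient_of_finrank_le {M : Type*} [AddCommGroup M] [Module.Finite ℤ M]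
    {L : Submodule ℤ M} (h : Module.finrank ℤ M ≤ Module.finrank ℤ L) : Finite (M ⧸ L) := by
  have hzero : Module.finrank ℤ (M ⧸ L) = 0 := by
    have := L.finrank_quotient_add_finrank
    lia
  exact Module.finite_of_fg_torsion _ (Module.finrank_eq_zero_iff_isTorsion.mp hzero)

theorem isFiniteRelIndex_of_finrank_le {M : Type*} [AddCommGroup M] [Module.Finite ℤ M]
    {L K : Submodule ℤ M} (hLK : L ≤ K) (h : Module.finrank ℤ K ≤ Module.finrank ℤ L) :
    L.toAddSubgroup.IsFiniteRelIndex K.toAddSubgroup := by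
  have : Finite (K ⧸ L.submoduleOf K) := finite_quotient_of_finrank_le <| by
    rwa [(Submodule.submoduleOfEquivOfLe hLK).finrank_eq]
  exact ⟨AddSubgroup.index_ne_zero_of_finite (H := (L.submoduleOf K).toAddSubgroup) (hH := this)⟩

theorem eventually_isFiniteRelIndex_of_antitone {M : Type*} [AddCommGroup M] [Module.Finite ℤ M]
    {S : ℕ → Submodule ℤ M} (hS : Antitone S) :
    ∀ᶠ n in atTop, (S (n + 1)).toAddSubgroup.IsFiniteRelIndex (S n).toAddSubgroup := by
  have hrank : Antitone fun n ↦ Module.finrank ℤ (S n) :=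
    fun m n hmn ↦ Submodule.finrank_mono (hS hmn)
  obtain ⟨N, hN⟩ := WellFoundedGT.monotone_chain_condition ⟨_, hrank.dual_right⟩
  have hstable (n : ℕ) (hn : N ≤ n) : Module.finrank ℤ (S N) = Module.finrank ℤ (S n) := hN n hn
  filter_upwards [eventually_ge_atTop N] with n hn
  refine isFiniteRelIndex_of_finrank_le (hS n.le_succ) ?_
  rw [← hstable n hn, ← hstable (n + 1) (by lia)]

namespace WeakMinimalCondition

open scoped IsMulCommutative

theorem of_subsingleton {G : Type*} [Group G] [Subsingleton G] : WeakMinimalCondition G :=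
  fun _ _ ↦ .of_forall fun _ ↦ Subgroup.isFiniteRelIndex_of_finiteIndex

theorem of_isMulCommutative {A : Type*} [Group A] [IsMulCommutative A] [Group.FG A] :
    WeakMinimalCondition A := by
  intro K hK
  have : Module.Finite ℤ (Additive A) := Module.Finite.iff_addGroup_fg.mpr inferInstance
  have hS : Antitone fun n ↦ AddSubgroup.toIntSubmodule (K n).toAddSubgroup :=
    fun _ _ hmn ↦ hK hmn
  filter_upwards [eventually_isFiniteRelIndex_of_antitone hS] with n hn
  refine ⟨?_⟩
  rw [← Subgroup.relIndex_toAddSubgroup]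
  exact hn.relIndex_ne_zero

theorem of_normal {G : Type*} [Group G] (N : Subgroup G) [N.Normal]
    (hN : WeakMinimalCondition N) (hQ : WeakMinimalCondition (G ⧸ N)) :
    WeakMinimalCondition G := by
  intro K hK
  filter_upwards [hN (fun n ↦ (K n).subgroupOf N) fun _ _ h ↦ Subgroup.comap_mono (hK h),
    hQ (fun n ↦ (K n).map (QuotientGroup.mk' N)) fun _ _ h ↦ Subgroup.map_mono (hK h)]
    with n hn hq
  refine ⟨?_⟩
  rw [← relIndex_inf_ker_mul_relIndex_map (QuotientGroup.mk' N) (hK n.le_succ),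
    QuotientGroup.ker_mk']
  refine mul_ne_zero ?_ hq.relIndex_ne_zero
  rw [← Subgroup.subgroupOf_map_subtype, ← Subgroup.relIndex_comap]
  exact hn.relIndex_ne_zero

end WeakMinimalCondition

section Nilpotent

variable {G : Type*} [Group G]

theorem commutator_closure_le {S T : Set G} {M : Subgroup G} [M.Normal]
    (h : ∀ s ∈ S, ∀ t ∈ T, ⁅s, t⁆ ∈ M) : ⁅Subgroup.closure S, Subgroup.closure T⁆ ≤ M := by
  rw [← QuotientGroup.ker_mk' M, ← Subgroup.map_eq_bot_iff, Subgroup.map_commutator,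
    MonoidHom.map_closure, MonoidHom.map_closure, Subgroup.commutator_eq_bot_iff_le_centralizer,
    Subgroup.centralizer_closure, Subgroup.closure_le]
  rintro _ ⟨s, hs, rfl⟩
  rw [SetLike.mem_coe, Subgroup.mem_centralizer_iff_commutator_eq_one']
  rintro _ ⟨t, ht, rfl⟩
  rw [← map_commutatorElement]
  exact (QuotientGroup.eq_one_iff _).mpr (h s hs t ht)

theorem commutator_top_eq_closure_sup {H : Subgroup G} {T X : Set G}
    (hT : H = Subgroup.closure T ⊔ ⁅H, ⊤⁆) (hX : Subgroup.closure X = ⊤) :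
    ⁅H, (⊤ : Subgroup G)⁆ =
      Subgroup.closure (Set.image2 (⁅·, ·⁆) T X) ⊔ ⁅⁅H, (⊤ : Subgroup G)⁆, ⊤⁆ := by
  set M := Subgroup.closure (Set.image2 (⁅·, ·⁆) T X) ⊔ ⁅⁅H, (⊤ : Subgroup G)⁆, ⊤⁆
  have hTH : Subgroup.closure T ≤ H := le_sup_left.trans_eq hT.symm
  have : H.Normal := Subgroup.commutator_top_right_le_iff.mp (le_sup_right.trans_eq hT.symm)
  have hM : M ≤ ⁅H, ⊤⁆ := by
    refine sup_le ((Subgroup.closure_le _).mpr ?_) (Subgroup.commutator_le_left _ _)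
    rintro _ ⟨t, ht, x, -, rfl⟩
    exact Subgroup.commutator_mem_commutator (hTH (Subgroup.subset_closure ht)) trivial
  have : M.Normal := Subgroup.commutator_top_right_le_iff.mp <|
    (Subgroup.commutator_mono hM le_rfl).trans le_sup_right
  refine le_antisymm ?_ hM
  have hclosure : H = Subgroup.closure (T ∪ (⁅H, ⊤⁆ : Subgroup G)) := by
    rwa [Subgroup.closure_union, Subgroup.closure_eq]
  suffices ⁅Subgroup.closure (T ∪ (⁅H, ⊤⁆ : Subgroup G)), Subgroup.closure X⁆ ≤ M by
    rwa [← hclosure, hX] at this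
  refine commutator_closure_le fun t ht x hx ↦ ?_
  rcases ht with ht | ht
  · exact Subgroup.mem_sup_left (Subgroup.subset_closure ⟨t, ht, x, hx, rfl⟩)
  · exact Subgroup.mem_sup_right (Subgroup.commutator_mem_commutator ht trivial)

theorem exists_finite_lowerCentralSeries_eq_closure_sup [Group.FG G] (n : ℕ) :
    ∃ T : Set G, T.Finite ∧ (⊤ : Subgroup G).lowerCentralSeries n =
      Subgroup.closure T ⊔ (⊤ : Subgroup G).lowerCentralSeries (n + 1) := by
  obtain ⟨X, hX, hXfin⟩ := Group.fg_iff.mp ‹Group.FG G›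
  induction n with
  | zero => exact ⟨X, hXfin, by rw [hX, top_sup_eq, Subgroup.lowerCentralSeries_zero]⟩
  | succ n ih =>
    obtain ⟨T, hTfin, hT⟩ := ih
    exact ⟨_, hTfin.image2 _ hXfin, commutator_top_eq_closure_sup hT hX⟩

theorem lowerCentralSeries_fg_of_succ_eq_bot [Group.FG G] {n : ℕ}
    (hn : (⊤ : Subgroup G).lowerCentralSeries (n + 1) = ⊥) :
    ((⊤ : Subgroup G).lowerCentralSeries n).FG := by
  obtain ⟨T, hTfin, hT⟩ := exists_finite_lowerCentralSeries_eq_closure_sup (G := G) n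
  rw [hn, sup_bot_eq] at hT
  exact (Subgroup.fg_iff _).mpr ⟨T, hT.symm, hTfin⟩

theorem lowerCentralSeries_quotient_self (n : ℕ) :
    (⊤ : Subgroup (G ⧸ (⊤ : Subgroup G).lowerCentralSeries n)).lowerCentralSeries n = ⊥ := by
  rw [← Subgroup.map_top_of_surjective _ (QuotientGroup.mk'_surjective _),
    ← Subgroup.map_lowerCentralSeries, Subgroup.map_eq_bot_iff, QuotientGroup.ker_mk']

theorem WeakMinimalCondition.of_lowerCentralSeries_eq_bot [Group.FG G] {n : ℕ}
    (hn : (⊤ : Subgroup G).lowerCentralSeries n = ⊥) : WeakMinimalCondition G := by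
  induction n generalizing G with
  | zero =>
    have : Subsingleton G := Subgroup.subsingleton_iff.mp (subsingleton_of_bot_eq_top hn.symm)
    exact .of_subsingleton
  | succ n ih =>
    set N := (⊤ : Subgroup G).lowerCentralSeries n
    have : Group.FG N :=
      (Group.fg_iff_subgroup_fg N).mpr (lowerCentralSeries_fg_of_succ_eq_bot hn)
    have : IsMulCommutative N := Subgroup.commutator_self_eq_bot_iff.mp <|
      le_bot_iff.mp ((Subgroup.commutator_mono le_rfl le_top).trans_eq hn)
    exact .of_normal N .of_isMulCommutative (ih (lowerCentralSeries_quotient_self n))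

theorem WeakMinimalCondition.of_isNilpotent [Group.IsNilpotent G] [Group.FG G] :
    WeakMinimalCondition G :=
  have ⟨_, hn⟩ := Subgroup.nilpotent_iff_lowerCentralSeries.mp ‹Group.IsNilpotent G›
  .of_lowerCentralSeries_eq_bot hn

end Nilpotent

section IteratedImage

variable {G : Type*} [Group G] {H : Subgroup G}

/-- The image of the `n`-th iterate of the partial endomorphism `f` of `G`, which applies to an
element as long as all its successive images lie in `H`; the `0`-th iterate has image `G`. -/
def iteratedImage (f : H →* G) : ℕ → Subgroup G
  | 0 => ⊤
  | n + 1 => ((iteratedImage f n).subgroupOf H).map f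

theorem iteratedImage_one (f : H →* G) : iteratedImage f 1 = f.range := by
  rw [iteratedImage, iteratedImage, Subgroup.top_subgroupOf, MonoidHom.range_eq_map]

theorem iteratedImage_antitone (f : H →* G) : Antitone (iteratedImage f) := by
  refine antitone_nat_of_succ_le fun n ↦ ?_
  induction n with
  | zero => exact le_top
  | succ n ih => exact Subgroup.map_mono (Subgroup.comap_mono ih)

theorem finiteIndex_range_of_iteratedImage [H.FiniteIndex] {f : H →* G}
    (hf : Function.Injective f) {n : ℕ}
    (h : (iteratedImage f (n + 1)).IsFiniteRelIndex (iteratedImage f n)) :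
    f.range.FiniteIndex := by
  induction n with
  | zero => rwa [iteratedImage_one, iteratedImage, Subgroup.isFiniteRelIndex_top_iff] at h
  | succ n ih => exact ih (isFiniteRelIndex_of_map_subgroupOf hf h)

end IteratedImage

theorem stmt_7_general {G : Type*} [Group G] (hG : WeakMinimalCondition G)
    (H : Subgroup G) (hH : H.FiniteIndex)
    (f : H →* G) (hf : Function.Injective f) :
    f.range.FiniteIndex := by
  obtain ⟨n, hn⟩ := (hG (iteratedImage f) (iteratedImage_antitone f)).exists
  exact finiteIndex_range_of_iteratedImage hf hn

theorem stmt_7 {G : Type*} [Group G] [Group.IsNilpotent G] (hfg : Group.FG G)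
    (H : Subgroup G) (hH : H.FiniteIndex)
    (f : H →* G) (hf : Function.Injective f) :
    f.range.FiniteIndex :=
  stmt_7_general .of_isNilpotent H hH f hf
end

section
/- Let K and P be groups with P a transitive permutation group on Y = {1,…,m}, and let W = K wr_Y P be the wreath product, B = K^Y the base group. Let G ≤ W be a nilpotent subgroup that induces a transitive action on Y. If x = (x_1,…,x_m)σ ∈ G with σ fixing the point 1 and x_1 of finite order, then x has finite order. -/
/-- The wreath product `K wr_Y Perm(Y)` with `Y = Fin m`, as a semidirect product of the
base group `K^Y` with the symmetric group acting by permuting coordinates. -/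
abbrev WreathPerm (K : Type*) [Group K] (m : ℕ) : Type _ :=
  (Fin m → K) ⋊[mulAutArrow] Equiv.Perm (Fin m)

/-!
Let `N` be the intersection of `G` with the base group. Some power of `x` lies in `N`, so let
`u ∈ N` have a coordinate `u_y` of finite order. By induction along the upper central series of `G`,
every commutator `⁅u, n⁆` with `n ∈ N` has finite order. Each `g ∈ G` has a positive power in `N`,
and roots are unique in `G` modulo its torsion subgroup, so `⁅u, g⁆` has finite order for all
`g ∈ G`. Hence each conjugate of `u` differs from `u` by a torsion element, and its coordinate at
`y` has finite order too. By transitivity, these coordinates are, up to conjugation in `K`, all the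
coordinates of `u`.

That torsion elements form a subgroup and that roots are unique modulo torsion both come from the
transfer `g ↦ g ^ [G : Z(G)]`, a homomorphism into the center when the center has finite index.
-/

open Subgroup
open scoped commutatorElement IsMulCommutative

section FiniteIndexCenter

variable {G : Type*} [Group G] [(center G).FiniteIndex]

theorem isMulTorsion_of_closure_eq_top_of_finiteIndex_center {S : Set G}
    (hclosure : closure S = ⊤) (hS : ∀ s ∈ S, IsOfFinOrder s) : IsMulTorsion G := by
  intro g
  have hle : closure S ≤ (CommGroup.torsion (center G)).comap (MonoidHom.transferCenterPow G) :=
    (closure_le _).2 fun s hs ↦ (MonoidHom.transferCenterPow G).isOfFinOrder (hS s hs)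
  have htransfer : IsOfFinOrder (MonoidHom.transferCenterPow G g) := hle (hclosure ▸ mem_top g)
  exact (Submonoid.isOfFinOrder_coe.2 htransfer).of_pow FiniteIndex.index_ne_zero

theorem isOfFinOrder_mul_inv_of_pow_eq_pow_of_finiteIndex_center {a b : G} {n : ℕ} (hn : n ≠ 0)
    (h : a ^ n = b ^ n) : IsOfFinOrder (a * b⁻¹) := by
  have htransfer : MonoidHom.transferCenterPow G (a * b⁻¹) ^ n = 1 := by
    rw [map_mul, map_inv, mul_pow, inv_pow, ← map_pow, ← map_pow, h, mul_inv_cancel]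
  have hfin : IsOfFinOrder (MonoidHom.transferCenterPow G (a * b⁻¹)) :=
    isOfFinOrder_iff_pow_eq_one.2 ⟨n, hn.pos, htransfer⟩
  exact (Submonoid.isOfFinOrder_coe.2 hfin).of_pow FiniteIndex.index_ne_zero

end FiniteIndexCenter

theorem closure_image_mk'_eq_top {G : Type*} [Group G] (N : Subgroup G) [N.Normal] {S : Set G}
    (hS : closure S = ⊤) : closure (QuotientGroup.mk' N '' S) = ⊤ := by
  rw [← MonoidHom.map_closure, hS, map_top_of_surjective _ (QuotientGroup.mk'_surjective N)]

theorem commute_of_commute_pow {G : Type*} [Group G] [IsMulTorsionFree G] {g h : G} {n : ℕ}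
    (hn : n ≠ 0) (hcomm : Commute g (h ^ n)) : Commute g h := by
  have hpow : (g * h * g⁻¹) ^ n = h ^ n := by
    rw [conj_pow, hcomm.eq, mul_inv_cancel_right]
  exact mul_inv_eq_iff_eq_mul.1 (pow_left_injective hn hpow)

section Nilpotent

variable {G : Type*} [Group G] [Group.IsNilpotent G]

theorem finite_of_closure_eq_top_of_isOfFinOrder {S : Set G} (hfin : S.Finite)
    (hclosure : closure S = ⊤) (hS : ∀ s ∈ S, IsOfFinOrder s) : Finite G := by
  revert S
  refine Group.nilpotent_center_quotient_ind (P := fun G _ _ ↦ ∀ {S : Set G}, S.Finite →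
    closure S = ⊤ → (∀ s ∈ S, IsOfFinOrder s) → Finite G) G (fun _ ↦ inferInstance) ?_
  intro G _ _ ih S hfin hclosure hS
  have : Finite (G ⧸ center G) :=
    ih (hfin.image _) (closure_image_mk'_eq_top _ hclosure)
      (Set.forall_mem_image.2 fun s hs ↦ (QuotientGroup.mk' _).isOfFinOrder (hS s hs))
  have : (center G).FiniteIndex := finiteIndex_of_finite_quotient
  have : Group.FG G := Group.fg_iff.2 ⟨S, hclosure, hfin⟩
  have : Finite (center G) := CommGroup.finite_of_fg_isMulTorsion _
    ((isMulTorsion_of_closure_eq_top_of_finiteIndex_center hclosure hS).subgroup _)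
  exact Finite.of_subgroup_quotient (center G)

theorem finiteIndex_center_of_closure_eq_top {S : Set G} (hfin : S.Finite)
    (hclosure : closure S = ⊤) (hS : ∀ s ∈ S, ∃ n ≠ 0, s ^ n ∈ center G) :
    (center G).FiniteIndex := by
  have : Finite (G ⧸ center G) := by
    refine finite_of_closure_eq_top_of_isOfFinOrder (hfin.image _)
      (closure_image_mk'_eq_top _ hclosure) (Set.forall_mem_image.2 fun s hs ↦ ?_)
    obtain ⟨n, hn, hpow⟩ := hS s hs
    exact isOfFinOrder_iff_pow_eq_one.2 ⟨n, hn.pos, (QuotientGroup.eq_one_iff _).2 hpow⟩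
  exact finiteIndex_of_finite_quotient

theorem isOfFinOrder_mul_inv_of_pow_eq_pow {a b : G} {n : ℕ} (hn : n ≠ 0) (h : a ^ n = b ^ n) :
    IsOfFinOrder (a * b⁻¹) := by
  let H := closure {a, b}
  let a' : H := ⟨a, subset_closure (by simp)⟩
  let b' : H := ⟨b, subset_closure (by simp)⟩
  have hpow : a' ^ n = b' ^ n := Subtype.ext h
  have hclosure : closure {a', b'} = ⊤ := by
    convert closure_closure_coe_preimage (k := {a, b})
    ext x
    simp only [Set.mem_insert_iff, Set.mem_singleton_iff, Set.mem_preimage, Subtype.ext_iff, a', b']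
  have hcentral : a' ^ n ∈ center H := by
    rw [← centralizer_univ, ← coe_top, ← hclosure, centralizer_closure, mem_centralizer_iff]
    rintro s (rfl | rfl)
    exacts [Commute.self_pow a' n, hpow ▸ Commute.self_pow b' n]
  have : (center H).FiniteIndex := by
    refine finiteIndex_center_of_closure_eq_top (Set.toFinite {a', b'}) hclosure ?_
    rintro s (rfl | rfl)
    exacts [⟨n, hn, hcentral⟩, ⟨n, hn, hpow ▸ hcentral⟩]
  exact Submonoid.isOfFinOrder_coe.2
    (isOfFinOrder_mul_inv_of_pow_eq_pow_of_finiteIndex_center hn hpow)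

theorem isOfFinOrder_mul_of_isNilpotent {a b : G} (ha : IsOfFinOrder a) (hb : IsOfFinOrder b) :
    IsOfFinOrder (a * b) := by
  obtain ⟨m, hm, ha⟩ := isOfFinOrder_iff_pow_eq_one.1 ha
  obtain ⟨n, hn, hb⟩ := isOfFinOrder_iff_pow_eq_one.1 hb
  have h : a ^ (m * n) = b⁻¹ ^ (m * n) := by
    rw [pow_mul, ha, one_pow, pow_mul', inv_pow, hb, inv_one, one_pow]
  rw [← inv_inv b]
  exact isOfFinOrder_mul_inv_of_pow_eq_pow (Nat.mul_ne_zero hm.ne' hn.ne') h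

theorem isOfFinOrder_map_mul_of_isNilpotent {K : Type*} [Group K] (f : G →* K) {a b : G}
    (ha : IsOfFinOrder (f a)) (hb : IsOfFinOrder (f b)) : IsOfFinOrder (f (a * b)) := by
  have : Group.IsNilpotent f.range :=
    Group.nilpotent_of_surjective f.rangeRestrict f.rangeRestrict_surjective
  have hmul : IsOfFinOrder (f.rangeRestrict a * f.rangeRestrict b) :=
    isOfFinOrder_mul_of_isNilpotent (Submonoid.isOfFinOrder_coe.1 ha)
      (Submonoid.isOfFinOrder_coe.1 hb)
  rw [map_mul]
  exact Submonoid.isOfFinOrder_coe.2 hmul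

theorem isOfFinOrder_map_commutatorElement {K : Type*} [Group K] (f : G →* K) {a : G}
    (ha : IsOfFinOrder (f a)) (b : G) : IsOfFinOrder (f ⁅a, b⁆) := by
  have hconj : IsOfFinOrder (f (b * a⁻¹ * b⁻¹)) :=
    (f.map_isConj (isConj_iff.2 ⟨b, rfl⟩)).isOfFinOrder (map_inv f a ▸ ha.inv)
  simpa only [commutatorElement_def, mul_assoc] using
    isOfFinOrder_map_mul_of_isNilpotent f ha hconj

variable (G) in
/-- The torsion subgroup of a nilpotent group: the set of all its elements of finite order. -/
def nilpotentTorsion : Subgroup G where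
  carrier := {g | IsOfFinOrder g}
  one_mem' := IsOfFinOrder.one
  mul_mem' := isOfFinOrder_mul_of_isNilpotent
  inv_mem' := IsOfFinOrder.inv

theorem mem_nilpotentTorsion {g : G} : g ∈ nilpotentTorsion G ↔ IsOfFinOrder g :=
  Iff.rfl

instance normal_nilpotentTorsion : (nilpotentTorsion G).Normal where
  conj_mem _ hg h := (isConj_iff.2 ⟨h, rfl⟩).isOfFinOrder hg

instance isMulTorsionFree_quotient_nilpotentTorsion :
    IsMulTorsionFree (G ⧸ nilpotentTorsion G) where
  pow_left_injective n hn a b hab := by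
    have hfin : IsOfFinOrder (a * b⁻¹) := isOfFinOrder_mul_inv_of_pow_eq_pow hn hab
    obtain ⟨g, hg⟩ := QuotientGroup.mk_surjective (a * b⁻¹)
    obtain ⟨k, hk, hpow⟩ := isOfFinOrder_iff_pow_eq_one.1 hfin
    rw [← hg, ← QuotientGroup.mk_pow, QuotientGroup.eq_one_iff, mem_nilpotentTorsion] at hpow
    rw [← mul_inv_eq_one, ← hg, QuotientGroup.eq_one_iff]
    exact hpow.of_pow hk.ne'

theorem isOfFinOrder_commutatorElement_iff {g h : G} :
    IsOfFinOrder ⁅g, h⁆ ↔ Commute (g : G ⧸ nilpotentTorsion G) h := by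
  rw [← commutatorElement_eq_one_iff_commute, ← mem_nilpotentTorsion, ← QuotientGroup.eq_one_iff]
  rfl

theorem isOfFinOrder_commutatorElement_of_pow {g h : G} {n : ℕ} (hn : n ≠ 0)
    (hfin : IsOfFinOrder ⁅g, h ^ n⁆) : IsOfFinOrder ⁅g, h⁆ :=
  isOfFinOrder_commutatorElement_iff.2 <|
    commute_of_commute_pow hn <| isOfFinOrder_commutatorElement_iff.1 hfin

section NormalSubgroup

variable {N : Subgroup G} [N.Normal] {K : Type*} [Group K] (f : N →* K)

theorem isOfFinOrder_map_conjNormal {u : N} (hu : IsOfFinOrder (f u)) {g : G}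
    (hcomm : IsOfFinOrder ⁅(u : G), g⁆) : IsOfFinOrder (f (MulAut.conjNormal g u)) := by
  have hcoe : ((MulAut.conjNormal g u * u⁻¹ : N) : G) = ⁅(u : G), g⁆⁻¹ := by
    rw [commutatorElement_inv, commutatorElement_def, coe_mul, MulAut.conjNormal_apply, coe_inv]
  have hquot : IsOfFinOrder (MulAut.conjNormal g u * u⁻¹) :=
    Submonoid.isOfFinOrder_coe.1 (hcoe ▸ hcomm.inv)
  simpa only [inv_mul_cancel_right] using
    isOfFinOrder_map_mul_of_isNilpotent f (f.isOfFinOrder hquot) hu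

theorem isOfFinOrder_of_isOfFinOrder_map (hN : ∀ g : G, ∃ n ≠ 0, g ^ n ∈ N)
    (hcore : ∀ u : N, (∀ g : G, IsOfFinOrder (f (MulAut.conjNormal g u))) → IsOfFinOrder u)
    {u : N} (hu : IsOfFinOrder (f u)) : IsOfFinOrder u := by
  obtain ⟨c, hc⟩ := Group.IsNilpotent.nilpotent G
  have hseries (i : ℕ) : ∀ u : N, (u : G) ∈ Subgroup.upperCentralSeries G i →
      IsOfFinOrder (f u) → IsOfFinOrder u := by
    induction i with
    | zero =>
      intro u hui _
      have : u = 1 := Subtype.ext hui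
      exact this ▸ IsOfFinOrder.one
    | succ i ih =>
      intro u hui hu
      have hcomm_N (n : N) : IsOfFinOrder ⁅u, n⁆ :=
        ih _ (Subgroup.mem_upperCentralSeries_succ_iff.1 hui n)
          (isOfFinOrder_map_commutatorElement f hu n)
      refine hcore u fun g ↦ isOfFinOrder_map_conjNormal f hu ?_
      obtain ⟨n, hn, hgn⟩ := hN g
      exact isOfFinOrder_commutatorElement_of_pow hn
        (N.subtype.isOfFinOrder (hcomm_N ⟨g ^ n, hgn⟩))
  exact hseries c u (hc ▸ mem_top _) hu

end NormalSubgroup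

end Nilpotent

/-- The permutational wreath product `K wr_Y P` of `K` by a group `P` acting on `Y`, as the
semidirect product of the base group `K^Y` with `P` permuting the coordinates. The action need not
be faithful. -/
abbrev WreathProduct (K P Y : Type*) [Group K] [Group P] [MulAction P Y] : Type _ :=
  (Y → K) ⋊[mulAutArrow] P

namespace WreathProduct

open SemidirectProduct

variable {K P Y : Type*} [Group K] [Group P] [MulAction P Y]

theorem left_mul_apply (g h : WreathProduct K P Y) (y : Y) :
    (g * h).left y = g.left y * h.left (g.right⁻¹ • y) :=
  rfl

theorem left_inv_apply (g : WreathProduct K P Y) (y : Y) :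
    g⁻¹.left y = (g.left (g.right • y))⁻¹ := by
  rw [← inv_inv g.right]
  rfl

theorem left_pow_apply_of_smul_eq {x : WreathProduct K P Y} {y : Y}
    (hfix : x.right • y = y) (n : ℕ) : (x ^ n).left y = x.left y ^ n := by
  induction n with
  | zero => rw [pow_zero, pow_zero, one_left, Pi.one_apply]
  | succ n ih => rw [pow_succ', left_mul_apply, inv_smul_eq_iff.2 hfix.symm, ih, pow_succ']

theorem left_conj_apply_smul {u : WreathProduct K P Y} (hu : u.right = 1)
    (g : WreathProduct K P Y) (y : Y) :
    (g * u * g⁻¹).left (g.right • y) =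
      g.left (g.right • y) * u.left y * (g.left (g.right • y))⁻¹ := by
  rw [left_mul_apply, left_mul_apply, mul_right, hu, mul_one, inv_smul_smul,
    left_inv_apply]

theorem isOfFinOrder_of_right_eq_one [Finite Y] {u : WreathProduct K P Y}
    (hright : u.right = 1) (hleft : ∀ y, IsOfFinOrder (u.left y)) : IsOfFinOrder u := by
  rw [← inl_left_mul_inr_right u, hright, map_one, mul_one]
  exact inl.isOfFinOrder (IsOfFinOrder.pi hleft)

theorem isOfFinOrder_of_forall_left_conj [Finite Y] {G : Subgroup (WreathProduct K P Y)} {y : Y}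
    (htrans : ∀ i : Y, ∃ g ∈ G, g.right • i = y) {u : WreathProduct K P Y} (hright : u.right = 1)
    (hconj : ∀ g ∈ G, IsOfFinOrder ((g * u * g⁻¹).left y)) : IsOfFinOrder u := by
  refine isOfFinOrder_of_right_eq_one hright fun i ↦ ?_
  obtain ⟨g, hg, rfl⟩ := htrans i
  have hisConj : IsConj (u.left i) ((g * u * g⁻¹).left (g.right • i)) :=
    isConj_iff.2 ⟨_, (left_conj_apply_smul hright g i).symm⟩
  exact hisConj.symm.isOfFinOrder (hconj g hg)

/-- The projection of the base group `K^Y`, seen as the kernel of the projection of the wreath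
product to `P`, onto its coordinate at `y`. -/
def baseEval (y : Y) : (rightHom : WreathProduct K P Y →* P).ker →* K where
  toFun u := u.1.left y
  map_one' := rfl
  map_mul' u v := by
    have hright : u.1.right = 1 := u.2
    rw [coe_mul, left_mul_apply, hright, inv_one, one_smul]

end WreathProduct

open SemidirectProduct in
theorem stmt_11_general {K P Y : Type*} [Group K] [Group P] [MulAction P Y] [Finite Y]
    (hP : IsMulTorsion P) (G : Subgroup (WreathProduct K P Y)) [Group.IsNilpotent G]
    (htrans : ∀ i j : Y, ∃ g ∈ G, g.right • i = j)
    {x : WreathProduct K P Y} (hxG : x ∈ G) {y : Y} (hfix : x.right • y = y)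
    (hfin : IsOfFinOrder (x.left y)) : IsOfFinOrder x := by
  let N : Subgroup G := rightHom.ker.comap G.subtype
  let f : N →* K := (WreathProduct.baseEval y).comp (G.subtype.subgroupComap rightHom.ker)
  have hN (g : G) : ∃ n ≠ 0, g ^ n ∈ N := by
    obtain ⟨n, hn, hpow⟩ := isOfFinOrder_iff_pow_eq_one.1 (hP (rightHom (g : WreathProduct K P Y)))
    exact ⟨n, hn.ne', (map_pow rightHom _ n).trans hpow⟩
  have hcore (u : N) (hu : ∀ g : G, IsOfFinOrder (f (MulAut.conjNormal g u))) :
      IsOfFinOrder u := by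
    have hright : u.1.1.right = 1 := u.2
    have hu_coe : IsOfFinOrder u.1.1 := WreathProduct.isOfFinOrder_of_forall_left_conj
      (htrans · y) hright fun g hg ↦ hu ⟨g, hg⟩
    exact Submonoid.isOfFinOrder_coe.1 (Submonoid.isOfFinOrder_coe.1 hu_coe)
  obtain ⟨n, hn, hxn⟩ := hN ⟨x, hxG⟩
  have hfxn : IsOfFinOrder (f ⟨_, hxn⟩) :=
    (congrArg IsOfFinOrder (WreathProduct.left_pow_apply_of_smul_eq hfix n)).mpr hfin.pow
  have hpow : IsOfFinOrder (⟨x, hxG⟩ ^ n : G) :=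
    N.subtype.isOfFinOrder (isOfFinOrder_of_isOfFinOrder_map f hN hcore hfxn)
  exact G.subtype.isOfFinOrder (hpow.of_pow hn)

theorem stmt_11 {K : Type*} [Group K] (m : ℕ) (hm : 0 < m)
    (G : Subgroup (WreathPerm K m)) [Group.IsNilpotent G]
    (htrans : ∀ i j : Fin m, ∃ g ∈ G, g.right i = j)
    (x : WreathPerm K m) (hxG : x ∈ G)
    (hfix : x.right ⟨0, hm⟩ = ⟨0, hm⟩)
    (hfin : IsOfFinOrder (x.left ⟨0, hm⟩)) :
    IsOfFinOrder x :=
  stmt_11_general isMulTorsion_of_finite G htrans hxG hfix hfin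
end

section
/- Let G be a finitely generated nilpotent group, H ≤ G with [G : H] = p a prime, and f : H → G a homomorphism with trivial f-core. Then G is either a finite p-group or free abelian. -/
/-!
Let `p` be the index of `H`, which is normal since `G` is nilpotent.

If `G` has an element of finite order outside `H`, it has one of order a power `p ^ k`, so
`G = N H` with `N` generated by the elements killed by `p ^ k`. In a nilpotent group, multiplying by
an element of `N` does not change `n`-th powers for `n` a large power of `p ^ k`, so the `n`-th
powers of `G` are those of `H`. They generate a normal `f`-invariant subgroup of `H`, hence are all
trivial.

Otherwise the `m`-torsion of `G` generates a normal `f`-invariant subgroup of `H` for each `m ≠ 0`,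
so `G` is torsion-free. If `Z(G) ≤ H`, the central elements having a power in the last nontrivial
term of the lower central series of `G` form a nontrivial normal `f`-invariant subgroup of `H`,
because that term and its analogue for `H` are commensurable. So `G = Z(G) H`, whence
`[G, G] = [H, H]` is `f`-invariant and must vanish.
-/

open Subgroup
open scoped commutatorElement

section Commutators

variable {G : Type*} [Group G]

theorem commutatorElement_pow_left {x g : G} (h : Commute ⁅x, g⁆ x) (n : ℕ) :
    ⁅x ^ n, g⁆ = ⁅x, g⁆ ^ n := by
  induction n with
  | zero => simp
  | succ n ih =>
    rw [pow_succ, commutatorElement_mul_left_eq_conj_mul, (h.pow_right n).symm.mul_inv_cancel, ih,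
      pow_succ']

theorem commutatorElement_pow_right {x g : G} (h : Commute ⁅x, g⁆ g) (n : ℕ) :
    ⁅x, g ^ n⁆ = ⁅x, g⁆ ^ n := by
  have h' : Commute ⁅g, x⁆ g := by
    rw [← commutatorElement_inv]
    exact h.inv_left
  rw [← commutatorElement_inv, commutatorElement_pow_left h', ← inv_pow, commutatorElement_inv]

theorem commute_mk_iff_commutatorElement_mem {K : Subgroup G} [K.Normal] {x y : G} :
    Commute (x : G ⧸ K) (y : G ⧸ K) ↔ ⁅x, y⁆ ∈ K := by
  rw [← commutatorElement_eq_one_iff_commute]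
  exact QuotientGroup.eq_one_iff ⁅x, y⁆

theorem mul_pow_div_mem {K : Subgroup G} [K.Normal] {x y : G} (h : ⁅x, y⁆ ∈ K) (n : ℕ) :
    (x * y) ^ n / (x ^ n * y ^ n) ∈ K :=
  QuotientGroup.eq_iff_div_mem.mp ((commute_mk_iff_commutatorElement_mem.mpr h).mul_pow n)

theorem pow_mem_of_mem_closure {S : Set G} [(closure S).Normal] {M : Subgroup G} {n : ℕ}
    (hM : ⁅closure S, closure S⁆ ≤ M) (hS : ∀ x ∈ S, x ^ n ∈ M) :
    ∀ x ∈ closure S, x ^ n ∈ M := by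
  intro x hx
  induction hx using closure_induction with
  | mem x hx => exact hS x hx
  | one => simp
  | mul x y hx hy ihx ihy =>
    have hdiv := mul_pow_div_mem (commutator_mem_commutator hx hy) n
    simpa using M.mul_mem (hM hdiv) (M.mul_mem ihx ihy)
  | inv x _ ih => simpa using ih

theorem commutatorElement_pow_mul {x g b w : G} {m : ℕ} (hx : Commute ⁅x, g⁆ x)
    (hb : Commute ⁅b, g⁆ g) (hw : Commute w g) (hxm : x ^ m = b * w) (n : ℕ) :
    ⁅x, g⁆ ^ (m * n) = ⁅b, g ^ n⁆ :=
  calc ⁅x, g⁆ ^ (m * n) = ⁅b * w, g⁆ ^ n := by rw [pow_mul, ← commutatorElement_pow_left hx, hxm]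
    _ = ⁅b, g⁆ ^ n := by rw [commutatorElement_mul_left_eq_conj_mul, hw.commutator_eq]; simp
    _ = ⁅b, g ^ n⁆ := (commutatorElement_pow_right hb n).symm

-- Modulo `⁅⁅A, ⊤⁆, ⊤⁆` the commutator is bilinear on `A × G`, so
-- `⁅x, g⁆ ^ (m * n) = ⁅x ^ m, g ^ n⁆`.
theorem pow_mul_mem_commutator_sup {A B C : Subgroup G} [A.Normal] {m n : ℕ} (hBA : B ≤ A)
    (hA : ∀ x ∈ A, x ^ m ∈ B ⊔ ⁅A, (⊤ : Subgroup G)⁆) (hC : ∀ g, g ^ n ∈ C) :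
    ∀ x ∈ ⁅A, (⊤ : Subgroup G)⁆,
      x ^ (m * n) ∈ ⁅B, C⁆ ⊔ ⁅⁅A, (⊤ : Subgroup G)⁆, (⊤ : Subgroup G)⁆ := by
  set K := ⁅⁅A, (⊤ : Subgroup G)⁆, (⊤ : Subgroup G)⁆
  have commute_mk {y : G} (hy : y ∈ ⁅A, (⊤ : Subgroup G)⁆) (g : G) :
      Commute (y : G ⧸ K) (g : G ⧸ K) :=
    commute_mk_iff_commutatorElement_mem.mpr (commutator_mem_commutator hy (mem_top g))
  have : (closure {c | ∃ x ∈ A, ∃ g ∈ (⊤ : Subgroup G), ⁅x, g⁆ = c}).Normal :=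
    inferInstanceAs ⁅A, (⊤ : Subgroup G)⁆.Normal
  refine pow_mem_of_mem_closure ((commutator_mono le_rfl le_top).trans le_sup_right) ?_
  rintro _ ⟨x, hx, g, -, rfl⟩
  obtain ⟨b, hb, w, hw, hbw⟩ := mem_sup_of_normal_right.mp (hA x hx)
  have hmk : ⁅(x : G ⧸ K), (g : G ⧸ K)⁆ ^ (m * n) = ⁅(b : G ⧸ K), (g : G ⧸ K) ^ n⁆ :=
    commutatorElement_pow_mul (commute_mk (commutator_mem_commutator hx (mem_top g)) x)
      (commute_mk (commutator_mem_commutator (hBA hb) (mem_top g)) g) (commute_mk hw g)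
      (congrArg (QuotientGroup.mk' K) hbw.symm) n
  have hdiv : ⁅x, g⁆ ^ (m * n) / ⁅b, g ^ n⁆ ∈ K := QuotientGroup.eq_iff_div_mem.mp hmk
  rw [← div_mul_cancel (⁅x, g⁆ ^ (m * n)) ⁅b, g ^ n⁆]
  exact mul_mem (mem_sup_right hdiv) (mem_sup_left (commutator_mem_commutator hb (hC g)))

theorem pow_mem_lowerCentralSeries_sup {H : Subgroup G} {n : ℕ} (hH : ∀ g, g ^ n ∈ H) (i : ℕ) :
    ∀ x ∈ (⊤ : Subgroup G).lowerCentralSeries i, x ^ n ^ (i + 1) ∈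
      H.lowerCentralSeries i ⊔ (⊤ : Subgroup G).lowerCentralSeries (i + 1) := by
  induction i with
  | zero => exact fun x _ ↦ mem_sup_left (by simpa using hH x)
  | succ i ih => exact pow_mul_mem_commutator_sup (lowerCentralSeries_mono i le_top) ih hH

theorem commutator_eq_commutator_of_sup_center_eq_top {H : Subgroup G}
    (h : H ⊔ center G = ⊤) : commutator G = ⁅H, H⁆ := by
  refine le_antisymm (commutator_le.mpr fun a _ b _ ↦ ?_) (commutator_mono le_top le_top)
  obtain ⟨x, hx, z, hz, rfl⟩ := mem_sup_of_normal_right.mp (h ▸ mem_top a)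
  obtain ⟨y, hy, w, hw, rfl⟩ := mem_sup_of_normal_right.mp (h ▸ mem_top b)
  have hzyw : ⁅z, y * w⁆ = 1 := Commute.commutator_eq (mem_center_iff.mp hz _).symm
  have hxw : ⁅x, w⁆ = 1 := Commute.commutator_eq (mem_center_iff.mp hw x)
  rw [commutatorElement_mul_left_eq_conj_mul, hzyw, commutatorElement_mul_right_eq_mul_conj, hxw]
  simpa using commutator_mem_commutator hx hy

end Commutators

section TorsionAndPowers

variable {G G' : Type*} [Group G] [Group G']

/-- The subgroup generated by the `m`-torsion elements of `G`, a substitute for the `m`-torsion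
itself, which need not be a subgroup when `G` is not abelian. -/
def torsionClosure (G : Type*) [Group G] (m : ℕ) : Subgroup G := closure {x | x ^ m = 1}

/-- The subgroup generated by the `n`-th powers of `G`, usually written `G ^ n`. -/
def powClosure (G : Type*) [Group G] (n : ℕ) : Subgroup G := closure (Set.range (· ^ n))

theorem mem_torsionClosure {x : G} {m : ℕ} (hx : x ^ m = 1) : x ∈ torsionClosure G m :=
  subset_closure hx

theorem pow_mem_powClosure (g : G) (n : ℕ) : g ^ n ∈ powClosure G n :=
  subset_closure ⟨g, rfl⟩

theorem map_torsionClosure_le (f : G →* G') (m : ℕ) :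
    (torsionClosure G m).map f ≤ torsionClosure G' m := by
  rw [torsionClosure, MonoidHom.map_closure, closure_le]
  rintro _ ⟨x, hx, rfl⟩
  exact mem_torsionClosure (by rw [← map_pow, hx, map_one])

theorem map_powClosure_le (f : G →* G') (n : ℕ) :
    (powClosure G n).map f ≤ powClosure G' n := by
  rw [powClosure, MonoidHom.map_closure, closure_le]
  rintro _ ⟨_, ⟨x, rfl⟩, rfl⟩
  simpa using pow_mem_powClosure (f x) n

instance torsionClosure_characteristic (m : ℕ) : (torsionClosure G m).Characteristic :=
  characteristic_iff_map_le.mpr fun φ ↦ map_torsionClosure_le φ.toMonoidHom m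

instance powClosure_characteristic (n : ℕ) : (powClosure G n).Characteristic :=
  characteristic_iff_map_le.mpr fun φ ↦ map_powClosure_le φ.toMonoidHom n

theorem map_subtype_torsionClosure {H : Subgroup G} {m : ℕ} (h : torsionClosure G m ≤ H) :
    (torsionClosure H m).map H.subtype = torsionClosure G m := by
  refine le_antisymm (map_torsionClosure_le _ m) ((closure_le _).mpr fun x hx ↦ ?_)
  exact ⟨⟨x, h (mem_torsionClosure hx)⟩, mem_torsionClosure (Subtype.ext hx), rfl⟩

theorem map_subtype_powClosure {H : Subgroup G} {n : ℕ} (h : ∀ g : G, ∃ x ∈ H, g ^ n = x ^ n) :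
    (powClosure H n).map H.subtype = powClosure G n := by
  refine le_antisymm (map_powClosure_le _ n) ((closure_le _).mpr ?_)
  rintro _ ⟨g, rfl⟩
  obtain ⟨x, hx, hgx⟩ := h g
  exact ⟨⟨x, hx⟩ ^ n, pow_mem_powClosure _ n, hgx.symm⟩

theorem exists_notMem_pow_prime_pow_eq_one {H : Subgroup G} [H.Normal] {p : ℕ} (hp : p.Prime)
    (hH : ∀ x, x ^ p ∈ H) {t : G} (ht : IsOfFinOrder t) (htH : t ∉ H) :
    ∃ u ∉ H, ∃ k, u ^ p ^ k = 1 := by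
  obtain ⟨k, q, hpq, hq⟩ :=
    Nat.exists_eq_pow_mul_and_not_dvd (orderOf_ne_zero_iff.mpr ht) p hp.ne_one
  refine ⟨t ^ q, fun htq ↦ htH ?_, k, by rw [← pow_mul, mul_comm, ← hq, pow_orderOf_eq_one]⟩
  have hgcd : (t : G ⧸ H) ^ p.gcd q = 1 :=
    pow_gcd_eq_one.mpr ⟨(QuotientGroup.eq_one_iff (t ^ p)).mpr (hH t),
      (QuotientGroup.eq_one_iff (t ^ q)).mpr htq⟩
  rwa [(hp.coprime_iff_not_dvd.mpr hpq).gcd_eq_one, pow_one, QuotientGroup.eq_one_iff] at hgcd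

end TorsionAndPowers

section Nilpotent

variable {G : Type*} [Group G]

theorem mul_pow_pow_eq_of_le_upperCentralSeries {m j : ℕ} {N : Subgroup G} [N.Normal]
    (hNj : N ≤ Subgroup.upperCentralSeries G j) (hNm : ∀ x ∈ N, x ^ m ∈ ⁅N, (⊤ : Subgroup G)⁆)
    {u : G} (hu : u ∈ N) (h : G) : (u * h) ^ m ^ j = h ^ m ^ j := by
  induction j generalizing N u h with
  | zero => simp [mem_bot.mp (hNj hu)]
  | succ j ih =>
    have hNj' : ⁅N, (⊤ : Subgroup G)⁆ ≤ Subgroup.upperCentralSeries G j :=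
      (commutator_mono hNj le_rfl).trans (commutator_upperCentralSeries_top_le G j)
    have hNm' : ∀ x ∈ ⁅N, (⊤ : Subgroup G)⁆,
        x ^ m ∈ ⁅⁅N, (⊤ : Subgroup G)⁆, (⊤ : Subgroup G)⁆ := by
      simpa using pow_mul_mem_commutator_sup (B := ⊥) (C := ⊤) (n := 1) bot_le
        (by simpa using hNm) (fun g ↦ mem_top _)
    have hdiv : (u * h) ^ m / h ^ m ∈ ⁅N, (⊤ : Subgroup G)⁆ := by
      have := mul_mem (mul_pow_div_mem (commutator_mem_commutator hu (mem_top h)) m) (hNm u hu)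
      rwa [div_mul_eq_div_div_swap, div_mul_cancel] at this
    have hpow := ih hNj' hNm' hdiv (h ^ m)
    rw [div_mul_cancel] at hpow
    rw [pow_succ', pow_mul, pow_mul, hpow]

theorem mul_pow_pow_nilpotencyClass_eq [Group.IsNilpotent G] {m : ℕ} {u : G}
    (hu : u ∈ torsionClosure G m) (h : G) :
    (u * h) ^ m ^ Group.nilpotencyClass G = h ^ m ^ Group.nilpotencyClass G := by
  refine mul_pow_pow_eq_of_le_upperCentralSeries (N := torsionClosure G m) ?_ ?_ hu h
  · rw [Subgroup.upperCentralSeries_nilpotencyClass]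
    exact le_top
  · have : (closure {x : G | x ^ m = 1}).Normal := inferInstanceAs (torsionClosure G m).Normal
    refine pow_mem_of_mem_closure (commutator_mono le_rfl le_top) fun x hx ↦ ?_
    rw [show x ^ m = 1 from hx]
    exact one_mem _

theorem eq_one_of_mul_pow_eq_pow (hG : ∀ x : G, IsOfFinOrder x → x = 1) {n : ℕ} (hn : n ≠ 0)
    {i : ℕ} {z y : G} (hz : z ∈ Subgroup.upperCentralSeries G i) (h : (z * y) ^ n = y ^ n) :
    z = 1 := by
  induction i generalizing z y with
  | zero => exact mem_bot.mp hz
  | succ i ih =>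
    -- `z * y` and its conjugate `y * z` have the same `n`-th power and differ by `⁅y, z⁆`.
    have hyz : ⁅y, z⁆ = 1 := by
      refine ih (y := z * y) ?_ ?_
      · rw [← commutatorElement_inv]
        exact inv_mem (hz y)
      · calc (⁅y, z⁆ * (z * y)) ^ n = (y * (z * y) * y⁻¹) ^ n := by
              rw [commutatorElement_def]; group
          _ = (z * y) ^ n := by rw [conj_pow, h]; group
    rw [(commutatorElement_eq_one_iff_commute.mp hyz).symm.mul_pow, mul_eq_right] at h
    exact hG z (isOfFinOrder_iff_pow_eq_one.mpr ⟨n, hn.bot_lt, h⟩)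

theorem isMulTorsionFree_of_isNilpotent [Group.IsNilpotent G]
    (hG : ∀ x : G, IsOfFinOrder x → x = 1) : IsMulTorsionFree G where
  pow_left_injective n hn x y hxy := by
    have hmem : x / y ∈ Subgroup.upperCentralSeries G (Group.nilpotencyClass G) := by
      rw [Subgroup.upperCentralSeries_nilpotencyClass]
      exact mem_top _
    exact div_eq_one.mp (eq_one_of_mul_pow_eq_pow (y := y) hG hn hmem (by simpa using hxy))

theorem mem_center_of_pow_mem_center [IsMulTorsionFree G] {x : G} {n : ℕ} (hn : n ≠ 0)
    (h : x ^ n ∈ center G) : x ∈ center G := by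
  refine mem_center_iff.mpr fun g ↦ mul_inv_eq_iff_eq_mul.mp (pow_left_injective hn ?_)
  simpa [conj_pow, mul_inv_eq_iff_eq_mul] using mem_center_iff.mp h g

/-- The central elements of `G` with a nontrivial power in `L`; when `G` is torsion-free and `L` is
central, this is the isolator of `L` in `G`. -/
def centralIsolator (L : Subgroup G) : Subgroup G where
  carrier := {x | x ∈ center G ∧ ∃ n ≠ 0, x ^ n ∈ L}
  one_mem' := ⟨one_mem _, 1, one_ne_zero, by simp⟩
  inv_mem' := fun ⟨hx, n, hn, hxn⟩ ↦ ⟨inv_mem hx, n, hn, by simpa using hxn⟩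
  mul_mem' := by
    rintro x y ⟨hx, m, hm, hxm⟩ ⟨hy, n, hn, hyn⟩
    refine ⟨mul_mem hx hy, m * n, mul_ne_zero hm hn, ?_⟩
    have hxy : Commute x y := mem_center_iff.mp hy x
    rw [hxy.mul_pow, pow_mul x, mul_comm m, pow_mul y]
    exact mul_mem (pow_mem hxm n) (pow_mem hyn m)

theorem centralIsolator_le_center (L : Subgroup G) : centralIsolator L ≤ center G :=
  fun _ hx ↦ hx.1

theorem le_centralIsolator {L : Subgroup G} (hL : L ≤ center G) : L ≤ centralIsolator L :=
  fun x hx ↦ ⟨hL hx, 1, one_ne_zero, by simpa using hx⟩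

instance centralIsolator_normal (L : Subgroup G) : (centralIsolator L).Normal where
  conj_mem x hx g := by
    rwa [mem_center_iff.mp (centralIsolator_le_center L hx) g, mul_inv_cancel_right]

theorem isCoatom_of_index_prime {H : Subgroup G} (hH : H.index.Prime) : IsCoatom H := by
  refine ⟨fun h ↦ hH.ne_one (index_eq_one.mpr h), fun N hN ↦ ?_⟩
  have hmul := relIndex_mul_index hN.le
  rcases hH.eq_one_or_self_of_dvd _ (Dvd.intro_left _ hmul) with h | h
  · exact index_eq_one.mp h
  · rw [h, mul_eq_right₀ hH.ne_zero, relIndex_eq_one] at hmul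
    exact absurd hmul hN.not_ge

end Nilpotent

section FinitelyGenerated

theorem finiteIndex_commutator_of_isMulTorsion {G : Type*} [Group G] [Group.FG G]
    (hG : IsMulTorsion G) : (commutator G).FiniteIndex := by
  have : Group.FG (Abelianization G) := QuotientGroup.fg (commutator G)
  have : Finite (Abelianization G) :=
    CommGroup.finite_of_fg_isMulTorsion _
      (hG.of_surjective (f := Abelianization.of) QuotientGroup.mk_surjective)
  exact finiteIndex_iff_finite_quotient.mpr this

theorem finite_of_isSolvable_of_isMulTorsion {G : Type*} [Group G] [Group.IsSolvable G] [Group.FG G]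
    (hG : IsMulTorsion G) : Finite G := by
  have finiteIndex_derivedSeries (k : ℕ) : (derivedSeries G k).FiniteIndex := by
    induction k with
    | zero => rw [derivedSeries_zero]; infer_instance
    | succ k ih =>
      have := finiteIndex_commutator_of_isMulTorsion (hG.subgroup (derivedSeries G k))
      refine ⟨?_⟩
      rw [derivedSeries_succ, ← map_subtype_commutator, index_map_subtype]
      exact mul_ne_zero this.index_ne_zero ih.index_ne_zero
  obtain ⟨k, hk⟩ := (Group.isSolvable_def G).mp inferInstance
  have hbot := (finiteIndex_derivedSeries k).index_ne_zero
  rw [hk, index_bot] at hbot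
  exact Nat.finite_of_card_ne_zero hbot

theorem nonempty_mulEquiv_fin_int {G : Type*} [CommGroup G] [Group.FG G] [IsMulTorsionFree G] :
    ∃ n : ℕ, Nonempty (G ≃* Multiplicative (Fin n → ℤ)) := by
  have : Module.Finite ℤ (Additive G) := Module.Finite.iff_addGroup_fg.mpr inferInstance
  exact ⟨_, ⟨AddEquiv.toMultiplicativeRight
    (Module.finBasis ℤ (Additive G)).equivFun.toAddEquiv⟩⟩

end FinitelyGenerated

section TrivialCore

variable {G : Type*} [Group G] {H : Subgroup G} {f : H →* G}

/-- The virtual endomorphism `f : H → G` has trivial `f`-core: the only subgroup of `H` that is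
normal in `G` and `f`-invariant is the trivial one. Such an `f` is also called simple. -/
def HasTrivialCore (f : H →* G) : Prop :=
  ∀ K : Subgroup G, (hKH : K ≤ H) → K.Normal →
    (∀ x : G, (hx : x ∈ K) → f ⟨x, hKH hx⟩ ∈ K) → K = ⊥

namespace HasTrivialCore

theorem eq_bot_of_map_subtype_eq (hf : HasTrivialCore f) {N : Subgroup G} [hN : N.Normal]
    {L : Subgroup H} (hL : L.map H.subtype = N) (hfL : L.map f ≤ N) : N = ⊥ := by
  subst hL
  refine hf _ (map_subtype_le L) hN ?_
  rintro _ ⟨y, hy, rfl⟩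
  exact hfL ⟨y, hy, rfl⟩

theorem exists_pow_pow_eq_one [Group.IsNilpotent G] (hf : HasTrivialCore f) {m : ℕ}
    (hm : torsionClosure G m ⊔ H = ⊤) : ∃ c, ∀ g : G, g ^ m ^ c = 1 := by
  set c := Group.nilpotencyClass G
  have hpow (g : G) : ∃ h ∈ H, g ^ m ^ c = h ^ m ^ c := by
    obtain ⟨u, hu, h, hh, rfl⟩ := mem_sup_of_normal_left.mp (hm ▸ mem_top g)
    exact ⟨h, hh, mul_pow_pow_nilpotencyClass_eq hu h⟩
  have hbot : powClosure G (m ^ c) = ⊥ :=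
    hf.eq_bot_of_map_subtype_eq (map_subtype_powClosure hpow) (map_powClosure_le f _)
  exact ⟨c, fun g ↦ mem_bot.mp (hbot ▸ pow_mem_powClosure g _)⟩

theorem isMulTorsionFree [Group.IsNilpotent G] (hf : HasTrivialCore f)
    (hH : ∀ x : G, IsOfFinOrder x → x ∈ H) : IsMulTorsionFree G := by
  refine isMulTorsionFree_of_isNilpotent fun x hx ↦ ?_
  obtain ⟨m, hm, hxm⟩ := isOfFinOrder_iff_pow_eq_one.mp hx
  have hle : torsionClosure G m ≤ H :=
    (closure_le _).mpr fun y hy ↦ hH y (isOfFinOrder_iff_pow_eq_one.mpr ⟨m, hm, hy⟩)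
  have hbot : torsionClosure G m = ⊥ :=
    hf.eq_bot_of_map_subtype_eq (map_subtype_torsionClosure hle) (map_torsionClosure_le f m)
  exact mem_bot.mp (hbot ▸ mem_torsionClosure hxm)

theorem lowerCentralSeries_eq_bot_of_succ [IsMulTorsionFree G] (hf : HasTrivialCore f)
    (hZ : center G ≤ H) {n : ℕ} (hn : n ≠ 0) (hH : ∀ g, g ^ n ∈ H) {i : ℕ}
    (hi : (⊤ : Subgroup G).lowerCentralSeries (i + 1) = ⊥) :
    (⊤ : Subgroup G).lowerCentralSeries i = ⊥ := by
  set L := (⊤ : Subgroup G).lowerCentralSeries i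
  have hLZ : L ≤ center G := commutator_top_right_eq_bot_iff_le_center.mp hi
  refine eq_bot_iff.mpr ((le_centralIsolator hLZ).trans_eq ?_)
  have hle : centralIsolator L ≤ H := (centralIsolator_le_center L).trans hZ
  refine hf _ hle inferInstance fun x hx ↦ ?_
  obtain ⟨-, m, hm, hxm⟩ := id hx
  have hN : m * n ^ (i + 1) ≠ 0 := mul_ne_zero hm (pow_ne_zero _ hn)
  have hxH : x ^ (m * n ^ (i + 1)) ∈ H.lowerCentralSeries i := by
    have hsup := pow_mem_lowerCentralSeries_sup hH i _ hxm
    rwa [hi, sup_bot_eq, ← pow_mul] at hsup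
  have hfx : f ⟨x, hle hx⟩ ^ (m * n ^ (i + 1)) ∈ L := by
    rw [← top_subtype_lowerCentralSeries] at hxH
    obtain ⟨y, hy, hyx⟩ := hxH
    rw [← map_pow, ← show y = ⟨x, hle hx⟩ ^ (m * n ^ (i + 1)) from Subtype.ext hyx]
    have : f y ∈ ((⊤ : Subgroup H).lowerCentralSeries i).map f := ⟨y, hy, rfl⟩
    rw [map_lowerCentralSeries] at this
    exact lowerCentralSeries_mono i le_top this
  exact ⟨mem_center_of_pow_mem_center hN (hLZ hfx), _, hN, hfx⟩

theorem subsingleton_of_center_le [Group.IsNilpotent G] [IsMulTorsionFree G]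
    (hf : HasTrivialCore f) (hZ : center G ≤ H) {n : ℕ} (hn : n ≠ 0) (hH : ∀ g, g ^ n ∈ H) :
    Subsingleton G := by
  have top_eq_bot (c : ℕ) (hc : (⊤ : Subgroup G).lowerCentralSeries c = ⊥) :
      (⊤ : Subgroup G) = ⊥ := by
    induction c with
    | zero => exact hc
    | succ c ih => exact ih (hf.lowerCentralSeries_eq_bot_of_succ hZ hn hH hc)
  exact subsingleton_iff.mp <|
    subsingleton_of_bot_eq_top (top_eq_bot _ Subgroup.lowerCentralSeries_nilpotencyClass).symm

theorem isMulCommutative_of_sup_center_eq_top (hf : HasTrivialCore f)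
    (hZ : H ⊔ center G = ⊤) : IsMulCommutative G := by
  have hHG := commutator_eq_commutator_of_sup_center_eq_top hZ
  refine (commutator_eq_bot_iff G).mp (hf.eq_bot_of_map_subtype_eq (L := commutator H) ?_ ?_)
  · rw [map_subtype_commutator, hHG]
  · rw [map_commutator_eq]
    exact commutator_mono le_top le_top

end HasTrivialCore

theorem stmt_18_general [Group.IsNilpotent G] {p : ℕ} (hp : p.Prime) (hindex : H.index = p)
    (hf : HasTrivialCore f) :
    (∃ k, ∀ g : G, g ^ p ^ k = 1) ∨ IsMulCommutative G ∧ IsMulTorsionFree G := by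
  have hmax : IsCoatom H := isCoatom_of_index_prime (hindex ▸ hp)
  have : H.Normal := 
    NormalizerCondition.normal_of_coatom H Group.normalizerCondition_of_isNilpotent hmax
  have hpow (g : G) : g ^ p ∈ H := hindex ▸ H.pow_index_mem g
  by_cases hT : ∀ x : G, IsOfFinOrder x → x ∈ H
  · right
    have : IsMulTorsionFree G := hf.isMulTorsionFree hT
    have hZ : ¬ center G ≤ H := fun hZ ↦
      have := hf.subsingleton_of_center_le hZ hp.ne_zero hpow
      hmax.1 (Subsingleton.elim _ _)
    exact ⟨hf.isMulCommutative_of_sup_center_eq_top (hmax.2 _ (left_lt_sup.mpr hZ)), this⟩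
  · left
    push Not at hT
    obtain ⟨t, ht, htH⟩ := hT
    obtain ⟨u, huH, k, huk⟩ := exists_notMem_pow_prime_pow_eq_one hp hpow ht htH
    have hsup : torsionClosure G (p ^ k) ⊔ H = ⊤ :=
      hmax.2 _ (right_lt_sup.mpr fun h ↦ huH (h (mem_torsionClosure huk)))
    obtain ⟨c, hc⟩ := hf.exists_pow_pow_eq_one hsup
    exact ⟨k * c, fun g ↦ by rw [pow_mul, hc]⟩

end TrivialCore

theorem stmt_18 {G : Type*} [Group G] [Group.IsNilpotent G] (hfg : Group.FG G)
    (H : Subgroup G) (p : ℕ) (hp : p.Prime) (hindex : H.index = p)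
    (f : H →* G)
    (hsimple : ∀ K : Subgroup G, (hKH : K ≤ H) → K.Normal →
      (∀ x : G, (hx : x ∈ K) → f ⟨x, hKH hx⟩ ∈ K) → K = ⊥) :
    (Finite G ∧ IsPGroup p G) ∨ ∃ n : ℕ, Nonempty (G ≃* Multiplicative (Fin n → ℤ)) := by
  rcases stmt_18_general hp hindex hsimple with ⟨k, hk⟩ | ⟨_, _⟩
  · have hG : IsMulTorsion G := fun g ↦
      isOfFinOrder_iff_pow_eq_one.mpr ⟨p ^ k, pow_pos hp.pos k, hk g⟩
    exact Or.inl ⟨finite_of_isSolvable_of_isMulTorsion hG, fun g ↦ ⟨k, hk g⟩⟩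
  · let _ : CommGroup G := { ‹Group G› with mul_comm := mul_comm' }
    exact Or.inr nonempty_mulEquiv_fin_int
end
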